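/- For every M ≥ 1 there exist positive constants c = c(M) and r = r(M) such that the following holds. Let G = (V,E) be a finite connected simple graph with maximal degree at most M which admits a circle packing (equivalently, is planar), and let W ⊆ V with |W| ≥ 2. Then there is a subset V' ⊆ W with |V'| ≥ |W|^c such that the effective resistance satisfies R(u,v) ≥ r · log|W| for every pair of distinct vertices u, v ∈ V'. -/

import Mathlib

open Finset
open scoped ENNReal

/-- `(z, rad)` is a circle packing for `G`: a family of closed round disks
(`C_v` has center `z v` and radius `rad v > 0`) with pairwise disjoint interiors,
such that for `u ≠ v`, `C_u ∩ C_v ≠ ∅` iff `{u,v}` is an edge of `G`. -/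
def IsCirclePacking {V : Type*} (G : SimpleGraph V)
    (z : V → EuclideanSpace ℝ (Fin 2)) (rad : V → ℝ) : Prop :=
  (∀ v, 0 < rad v) ∧
  (∀ u v : V, u ≠ v →
    interior (Metric.closedBall (z u) (rad u)) ∩
      interior (Metric.closedBall (z v) (rad v)) = ∅) ∧
  (∀ u v : V, u ≠ v →
    ((Metric.closedBall (z u) (rad u) ∩ Metric.closedBall (z v) (rad v)).Nonempty ↔ G.Adj u v))

/-- `G` admits a circle packing (equivalently, by Koebe's theorem, `G` is planar). -/
def HasCirclePacking {V : Type*} (G : SimpleGraph V) : Prop :=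
  ∃ z rad, IsCirclePacking G z rad

/-- The Dirichlet energy `D(f) = ∑_{{a,b} ∈ E} (f a - f b)²`. -/
noncomputable def dirichlet {V : Type*} [Fintype V] [DecidableEq V] (G : SimpleGraph V)
    [DecidableRel G.Adj] (f : V → ℝ) : ℝ :=
  ∑ e ∈ G.edgeFinset, Sym2.lift ⟨fun a b => (f a - f b) ^ 2, fun a b => by ring⟩ e

/-- The effective resistance
`R(u,v) = sup { (f v - f u)² / D(f) : f : V → ℝ, D(f) > 0 }`, as a value in `[0,∞]`. -/
noncomputable def effRes {V : Type*} [Fintype V] [DecidableEq V] (G : SimpleGraph V)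
    [DecidableRel G.Adj] (u v : V) : ℝ≥0∞ :=
  ⨆ (f : V → ℝ) (_ : 0 < dirichlet G f), ENNReal.ofReal ((f v - f u) ^ 2 / dirichlet G f)

/-!
If all of `W` lies within effective resistance `ρ` of a vertex `v₀`, the unit current flows `θ_w`
from `v₀` to the points `w ∈ W` have `‖θ_w‖² ≤ ρ / 2`, so `∑ w ∈ W, ⟪θ_w, ·⟫ θ_w` is a positive
operator of trace at most `ρ |W| / 2`. In the circle packing one finds, for every `k ≲ |W|`, `k`
functions of bounded energy with disjoint supports, each equal to `1` on `≳ |W| / k` points of `W`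
and vanishing at `v₀`; testing with their gradients, the `k`-th largest eigenvalue is `≳ |W| / k` by
min-max. Summing over `k` bounds the trace below by a multiple of `|W| log |W|`, hence
`log |W| ≲ ρ`. So for `ρ` a small multiple of `log |W|` the resistance balls meet `W` in few points,
and a maximal `ρ`-separated subset of `W` is large.
-/

section Separation

lemma exists_pairwise_subset_card_le_sum {α : Type*} (r : α → α → Prop) [DecidableRel r]
    [Std.Symm r] (W : Finset α) (hirrefl : ∀ w ∈ W, ¬ r w w) :
    ∃ T ⊆ W, (T : Set α).Pairwise r ∧ #W ≤ ∑ t ∈ T, #{w ∈ W | ¬ r t w} := by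
  classical
  obtain ⟨T, hT, hmax⟩ := exists_max_image
    (W.powerset.filter fun T : Finset α => (T : Set α).Pairwise r) card ⟨∅, by simp⟩
  obtain ⟨hTW, hpair⟩ : T ⊆ W ∧ (T : Set α).Pairwise r := by simpa using hT
  refine ⟨T, hTW, hpair, le_trans (card_le_card fun w hw => ?_) card_biUnion_le⟩
  by_contra hfar
  have hfar : ∀ t ∈ T, r t w := by simpa [hw] using hfar
  have hwT : w ∉ T := fun h => hirrefl w hw (hfar w h)
  have hinsert : insert w T ∈ W.powerset.filter fun T : Finset α => (T : Set α).Pairwise r := by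
    simp only [mem_filter, mem_powerset, coe_insert]
    exact ⟨insert_subset hw hTW, hpair.insert_of_symm fun t ht _ => symm (hfar t ht)⟩
  have := hmax _ hinsert
  rw [card_insert_of_notMem hwT] at this
  omega

lemma exists_pairwise_subset_card_le_mul {α : Type*} (r : α → α → Prop) [DecidableRel r]
    [Std.Symm r] (W : Finset α) (hirrefl : ∀ w ∈ W, ¬ r w w) {B : ℝ}
    (hB : ∀ t ∈ W, (#{w ∈ W | ¬ r t w} : ℝ) ≤ B) :
    ∃ T ⊆ W, (T : Set α).Pairwise r ∧ (#W : ℝ) ≤ #T * B := by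
  obtain ⟨T, hTW, hpair, hcard⟩ := exists_pairwise_subset_card_le_sum r W hirrefl
  refine ⟨T, hTW, hpair, ?_⟩
  calc (#W : ℝ) ≤ ∑ t ∈ T, (#{w ∈ W | ¬ r t w} : ℝ) := by exact_mod_cast hcard
    _ ≤ #T * B := (sum_le_card_nsmul T _ _ fun t ht => hB t (hTW ht)).trans_eq (nsmul_eq_mul _ _)

end Separation

section Volume

open Metric Module MeasureTheory

variable {E : Type*} [NormedAddCommGroup E] [NormedSpace ℝ E] [FiniteDimensional ℝ E] {ι : Type*}

lemma sum_radius_pow_finrank_le {A : Finset ι} {y : ι → E} {t : ι → ℝ} {x : E} {R : ℝ}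
    (ht : ∀ i ∈ A, 0 < t i) (hR : 0 < R)
    (hdisj : (A : Set ι).PairwiseDisjoint fun i => ball (y i) (t i))
    (hsub : ∀ i ∈ A, ball (y i) (t i) ⊆ ball x R) :
    ∑ i ∈ A, t i ^ finrank ℝ E ≤ R ^ finrank ℝ E := by
  borelize E
  let μ : Measure E := Measure.addHaar
  have hunit : 0 < μ.real (ball 0 1) := ENNReal.toReal_pos (measure_ball_pos μ 0 one_pos).ne'
    measure_ball_lt_top.ne
  have hball : ∀ (p : E) {s : ℝ}, 0 < s →
      μ.real (ball p s) = s ^ finrank ℝ E * μ.real (ball 0 1) := by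
    intro p s hs
    rw [measureReal_def, Measure.addHaar_ball_of_pos μ p hs, ENNReal.toReal_mul,
      ENNReal.toReal_ofReal (by positivity), measureReal_def]
  refine le_of_mul_le_mul_right ?_ hunit
  calc (∑ i ∈ A, t i ^ finrank ℝ E) * μ.real (ball 0 1)
      = ∑ i ∈ A, μ.real (ball (y i) (t i)) := by
        rw [sum_mul]
        exact sum_congr rfl fun i hi => (hball _ (ht i hi)).symm
    _ = μ.real (⋃ i ∈ A, ball (y i) (t i)) :=
        (measureReal_biUnion_finset hdisj (fun _ _ => measurableSet_ball)
          fun _ _ => measure_ball_lt_top.ne).symm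
    _ ≤ μ.real (ball x R) := measureReal_mono (Set.iUnion₂_subset hsub) measure_ball_lt_top.ne
    _ = R ^ finrank ℝ E * μ.real (ball 0 1) := hball x hR

lemma sum_min_radius_pow_finrank_le {A : Finset ι} {y : ι → E} {t : ι → ℝ} {x : E} {R s : ℝ}
    (ht : ∀ i ∈ A, 0 < t i) (hR : 0 ≤ R) (hs : 0 < s)
    (hdisj : (A : Set ι).PairwiseDisjoint fun i => ball (y i) (t i))
    (hdist : ∀ i ∈ A, dist (y i) x ≤ R + t i) :
    ∑ i ∈ A, min (t i) s ^ finrank ℝ E ≤ (R + 2 * s) ^ finrank ℝ E := by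
  have hcenter : ∀ i ∈ A, ∃ p, dist (y i) p ≤ t i - min (t i) s ∧ dist p x ≤ R + min (t i) s := by
    intro i hi
    have hmin : 0 < min (t i) s := lt_min (ht i hi) hs
    exact exists_dist_le_le (sub_nonneg.2 (min_le_left _ _)) (by positivity)
      (by linarith [hdist i hi])
  choose! p hpy hpx using hcenter
  refine sum_radius_pow_finrank_le (y := p) (x := x) (fun i hi => lt_min (ht i hi) hs)
    (by positivity) (hdisj.mono_on fun i hi => ball_subset_ball' ?_)
    fun i hi => ball_subset_ball' ?_
  · linarith [hpy i hi, dist_comm (p i) (y i)]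
  · linarith [hpx i hi, min_le_right (t i) s]

lemma card_le_of_pairwise_le_dist {A : Finset ι} {y : ι → E} {x : E} {s : ℝ} (hs : 0 < s) (K : ℕ)
    (hsep : (A : Set ι).Pairwise fun i j => s ≤ dist (y i) (y j))
    (hdist : ∀ i ∈ A, dist (y i) x ≤ K * s) :
    #A ≤ (2 * K + 1) ^ finrank ℝ E := by
  have hvol : ∑ i ∈ A, (s / 2) ^ finrank ℝ E ≤ (K * s + s / 2) ^ finrank ℝ E := by
    refine sum_radius_pow_finrank_le (y := y) (x := x) (fun _ _ => by positivity) (by positivity)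
      (fun i hi j hj hij => ball_disjoint_ball ?_) fun i hi => ball_subset_ball' ?_
    · linarith [hsep hi hj hij]
    · linarith [hdist i hi]
  have hscale : (K * s + s / 2) ^ finrank ℝ E =
      (2 * K + 1) ^ finrank ℝ E * (s / 2) ^ finrank ℝ E := by
    rw [← mul_pow]
    ring
  rw [sum_const, nsmul_eq_mul, hscale] at hvol
  exact_mod_cast le_of_mul_le_mul_right hvol (by positivity)

lemma card_le_mul_of_card_dist_lt_le {A : Finset ι} {y : ι → E} {x : E} {s : ℝ} (hs : 0 < s)
    (K : ℕ) {m : ℕ} (hdist : ∀ i ∈ A, dist (y i) x ≤ K * s)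
    (hm : ∀ i ∈ A, #{j ∈ A | dist (y j) (y i) < s} ≤ m) :
    #A ≤ (2 * K + 1) ^ finrank ℝ E * m := by
  have : Std.Symm fun i j => s ≤ dist (y i) (y j) := ⟨fun i j h => by rwa [dist_comm]⟩
  obtain ⟨T, hTA, hsep, hcard⟩ := exists_pairwise_subset_card_le_sum
    (fun i j => s ≤ dist (y i) (y j)) A fun i _ => by simpa using hs
  calc #A ≤ ∑ t ∈ T, #{i ∈ A | ¬ s ≤ dist (y t) (y i)} := hcard
    _ ≤ #T * m := sum_le_card_nsmul _ _ _ fun t ht => by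
        simpa only [not_le, dist_comm (y t)] using hm t (hTA ht)
    _ ≤ (2 * K + 1) ^ finrank ℝ E * m :=
        Nat.mul_le_mul_right m
          (card_le_of_pairwise_le_dist hs K hsep fun i hi => hdist i (hTA hi))

end Volume

section MinMax

open Module

variable {𝕜 E : Type*} [RCLike 𝕜] [NormedAddCommGroup E] [InnerProductSpace 𝕜 E]

lemma exists_mem_norm_eq_one_forall_inner_eq_zero {n : ℕ} {S : Submodule 𝕜 E}
    (hS : n < finrank 𝕜 S) (F : Fin n → E) :
    ∃ f ∈ S, ‖f‖ = 1 ∧ ∀ i, inner 𝕜 (F i) f = 0 := by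
  have : FiniteDimensional 𝕜 S := FiniteDimensional.of_finrank_pos (n.zero_le.trans_lt hS)
  let coeffs : S →ₗ[𝕜] Fin n → 𝕜 :=
    LinearMap.pi fun i => (innerₛₗ 𝕜 (F i)).comp S.subtype
  obtain ⟨f, hf, hf0⟩ := coeffs.ker.ne_bot_iff.1 <| LinearMap.ker_ne_bot_of_finrank_lt <| by
    simpa using hS
  have hf0 : (f : E) ≠ 0 := by simpa using hf0
  refine ⟨((‖(f : E)‖ : 𝕜)⁻¹) • (f : E), S.smul_mem _ f.2, norm_smul_inv_norm hf0, fun i => ?_⟩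
  have : inner 𝕜 (F i) (f : E) = 0 := congrFun hf i
  rw [inner_smul_right, this, mul_zero]

lemma exists_orthonormal_mem_of_lt_finrank {n : ℕ} (S : Fin n → Submodule 𝕜 E)
    (hS : ∀ i : Fin n, i < finrank 𝕜 (S i)) :
    ∃ F : Fin n → E, Orthonormal 𝕜 F ∧ ∀ i, F i ∈ S i := by
  induction n with
  | zero => exact ⟨Fin.elim0, ⟨fun i => i.elim0, fun i => i.elim0⟩, fun i => i.elim0⟩
  | succ n ih =>
    obtain ⟨F, hF, hmem⟩ := ih (fun i => S i.castSucc) fun i => hS i.castSucc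
    obtain ⟨f, hfS, hf1, hfF⟩ :=
      exists_mem_norm_eq_one_forall_inner_eq_zero (hS (Fin.last n)) F
    refine ⟨Fin.snoc F f, ⟨fun i => ?_, fun i j hij => ?_⟩, fun i => ?_⟩
    · cases i using Fin.lastCases with
      | last => simpa using hf1
      | cast i => simpa using hF.1 i
    · cases i using Fin.lastCases with
      | last =>
        cases j using Fin.lastCases with
        | last => exact absurd rfl hij
        | cast j => simpa using inner_eq_zero_symm.1 (hfF j)
      | cast i =>
        cases j using Fin.lastCases with
        | last => simpa using hfF i
        | cast j => simpa using hF.2 fun h => hij (congrArg Fin.castSucc h)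
    · cases i using Fin.lastCases with
      | last => simpa using hfS
      | cast i => simpa using hmem i

/- The left side bounds the sum of the `n` largest eigenvalues of `∑ w, ⟪x w, ·⟫ x w` from below by
the min-max principle, and the right side is the trace of this operator. -/
lemma sum_le_sum_norm_sq_of_lt_finrank {ι : Type*} (W : Finset ι) (x : ι → E) {n : ℕ}
    (S : Fin n → Submodule 𝕜 E) (hS : ∀ i : Fin n, i < finrank 𝕜 (S i)) (μ : Fin n → ℝ)
    (hμ : ∀ i, ∀ f ∈ S i, μ i * ‖f‖ ^ 2 ≤ ∑ w ∈ W, ‖inner 𝕜 (x w) f‖ ^ 2) :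
    ∑ i, μ i ≤ ∑ w ∈ W, ‖x w‖ ^ 2 := by
  obtain ⟨F, hF, hmem⟩ := exists_orthonormal_mem_of_lt_finrank S hS
  calc ∑ i, μ i ≤ ∑ i, ∑ w ∈ W, ‖inner 𝕜 (x w) (F i)‖ ^ 2 :=
        sum_le_sum fun i _ => by simpa [hF.1 i] using hμ i (F i) (hmem i)
    _ = ∑ w ∈ W, ∑ i, ‖inner 𝕜 (F i) (x w)‖ ^ 2 := by
        rw [sum_comm]
        exact sum_congr rfl fun w _ => sum_congr rfl fun i _ => by rw [norm_inner_symm]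
    _ ≤ ∑ w ∈ W, ‖x w‖ ^ 2 := sum_le_sum fun w _ => hF.sum_inner_products_le (x w)

end MinMax

section Gradient

open scoped RealInnerProductSpace

variable {V : Type*} (G : SimpleGraph V)

/-- The discrete gradient of a function on the vertices. It is indexed by the oriented edges, so
that its squared norm is twice the Dirichlet energy. -/
def grad : (V → ℝ) →ₗ[ℝ] EuclideanSpace ℝ G.Dart where
  toFun f := WithLp.toLp 2 fun d => f d.fst - f d.snd
  map_add' f g := by ext d; simp only [Pi.add_apply, PiLp.add_apply]; ring
  map_smul' c f := by ext d; simp only [Pi.smul_apply, PiLp.smul_apply, smul_eq_mul,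
    RingHom.id_apply]; ring

@[simp]
lemma grad_apply (f : V → ℝ) (d : G.Dart) : grad G f d = f d.fst - f d.snd := rfl

variable {G} [Fintype V] [DecidableRel G.Adj]

lemma norm_sq_grad (f : V → ℝ) : ‖grad G f‖ ^ 2 = ∑ d : G.Dart, (f d.fst - f d.snd) ^ 2 := by
  simp [EuclideanSpace.norm_sq_eq]

lemma norm_sq_grad_eq_two_mul_dirichlet [DecidableEq V] (f : V → ℝ) :
    ‖grad G f‖ ^ 2 = 2 * dirichlet G f := by
  let energy : Sym2 V → ℝ := Sym2.lift ⟨fun a b => (f a - f b) ^ 2, fun a b => by ring⟩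
  calc ‖grad G f‖ ^ 2 = ∑ d : G.Dart, energy d.edge := norm_sq_grad f
    _ = ∑ e ∈ G.edgeFinset, ∑ d : G.Dart with d.edge = e, energy d.edge :=
        (sum_fiberwise_of_maps_to (fun d _ => SimpleGraph.mem_edgeFinset.2 d.edge_mem) _).symm
    _ = ∑ e ∈ G.edgeFinset, 2 * energy e := sum_congr rfl fun e he => by
        rw [sum_congr rfl fun d hd => congrArg energy (mem_filter.1 hd).2, sum_const,
          G.dart_edge_fiber_card e (SimpleGraph.mem_edgeFinset.1 he), nsmul_eq_mul, Nat.cast_ofNat]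
    _ = 2 * dirichlet G f := (mul_sum _ _ _).symm

lemma norm_grad_le_norm_grad {f g : V → ℝ}
    (h : ∀ a b, G.Adj a b → |f a - f b| ≤ |g a - g b|) :
    ‖grad G f‖ ≤ ‖grad G g‖ := by
  rw [← sq_le_sq₀ (norm_nonneg _) (norm_nonneg _), norm_sq_grad, norm_sq_grad]
  exact sum_le_sum fun d _ => sq_le_sq.2 (h _ _ d.adj)

lemma sum_dart_fst (q : V → ℝ) : ∑ d : G.Dart, q d.fst = ∑ v, G.degree v * q v := by
  classical
  rw [← sum_fiberwise univ fun d : G.Dart => d.fst]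
  refine sum_congr rfl fun v _ => ?_
  rw [sum_congr rfl fun d hd => congrArg q (mem_filter.1 hd).2, sum_const,
    G.dart_fst_fiber_card_eq_degree, nsmul_eq_mul]

lemma sum_dart_snd (q : V → ℝ) : ∑ d : G.Dart, q d.snd = ∑ v, G.degree v * q v := by
  rw [← sum_dart_fst]
  exact Equiv.sum_comp (Function.Involutive.toPerm _ SimpleGraph.Dart.symm_involutive)
    fun d : G.Dart => q d.fst

lemma norm_sq_grad_le_of_sq_sub_le {M : ℕ} (hdeg : ∀ v, G.degree v ≤ M) {f q : V → ℝ}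
    (hq : ∀ v, 0 ≤ q v) (h : ∀ a b, G.Adj a b → (f a - f b) ^ 2 ≤ q a + q b) :
    ‖grad G f‖ ^ 2 ≤ 2 * M * ∑ v, q v := by
  calc ‖grad G f‖ ^ 2 ≤ ∑ d : G.Dart, (q d.fst + q d.snd) := by
        rw [norm_sq_grad]
        exact sum_le_sum fun d _ => h _ _ d.adj
    _ = 2 * ∑ v, G.degree v * q v := by
        rw [sum_add_distrib, sum_dart_fst, sum_dart_snd, two_mul]
    _ ≤ 2 * ∑ v, M * q v := by
        gcongr with v
        · exact hq v
        · exact hdeg v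
    _ = 2 * M * ∑ v, q v := by rw [← mul_sum, mul_assoc]

lemma exists_forall_inner_grad_eq_sub {u v : V} (h : G.Reachable u v) :
    ∃ θ : EuclideanSpace ℝ G.Dart, ∀ f, ⟪θ, grad G f⟫ = f v - f u := by
  classical
  obtain ⟨p⟩ := h
  induction p with
  | nil => exact ⟨0, fun f => by rw [inner_zero_left, sub_self]⟩
  | @cons u v w hadj _ ih =>
    obtain ⟨θ, hθ⟩ := ih
    refine ⟨θ - EuclideanSpace.single ⟨(u, v), hadj⟩ 1, fun f => ?_⟩
    rw [inner_sub_left, hθ, EuclideanSpace.inner_single_left, grad_apply, map_one]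
    ring

/- Thomson's principle: projecting any unit flow onto the gradients minimises its norm, and the
resulting current `θ = grad h` has `h v - h u = ‖θ‖ ^ 2`. -/
lemma exists_forall_inner_grad_eq_sub_and_norm_sq_le_effRes [DecidableEq V] {u v : V}
    (h : G.Reachable u v) :
    ∃ θ : EuclideanSpace ℝ G.Dart, (∀ f, ⟪θ, grad G f⟫ = f v - f u) ∧
      ENNReal.ofReal (2 * ‖θ‖ ^ 2) ≤ effRes G u v := by
  obtain ⟨θ₀, hθ₀⟩ := exists_forall_inner_grad_eq_sub h
  obtain ⟨θ, ⟨g, rfl⟩, θ', hθ', rfl⟩ := Submodule.exists_add_mem_mem_orthogonal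
    (K := (grad G).range) θ₀
  have hflow : ∀ f, ⟪grad G g, grad G f⟫ = f v - f u := by
    intro f
    rw [← hθ₀ f, inner_add_left,
      Submodule.inner_left_of_mem_orthogonal (LinearMap.mem_range_self _ f) hθ', add_zero]
  refine ⟨grad G g, hflow, ?_⟩
  rcases eq_or_ne (grad G g) 0 with h0 | h0
  · simp [h0]
  have hdir : dirichlet G g = ‖grad G g‖ ^ 2 / 2 := by
    rw [norm_sq_grad_eq_two_mul_dirichlet, mul_div_cancel_left₀ _ two_ne_zero]
  refine le_iSup₂_of_le g (by rw [hdir]; positivity) (ENNReal.ofReal_le_ofReal (le_of_eq ?_))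
  rw [← hflow, real_inner_self_eq_norm_sq, hdir]
  field_simp

end Gradient

section Cutoff

variable {X : Type*} [PseudoMetricSpace X] {x p : X} {s : ℝ}

/-- The piecewise linear cutoff which is `1` on the ball of radius `s` about `x` and vanishes
outside the ball of radius `2 * s`. -/
noncomputable def cutoff (x : X) (s : ℝ) (p : X) : ℝ := max 0 (min 1 (2 - dist p x / s))

lemma cutoff_nonneg : 0 ≤ cutoff x s p := le_max_left _ _

lemma cutoff_le_one : cutoff x s p ≤ 1 := max_le zero_le_one (min_le_left _ _)

lemma cutoff_eq_one (hs : 0 < s) (h : dist p x ≤ s) : cutoff x s p = 1 := by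
  have : dist p x / s ≤ 1 := (div_le_one hs).2 h
  rw [cutoff, min_eq_left (by linarith), max_eq_right zero_le_one]

lemma cutoff_eq_zero (hs : 0 < s) (h : 2 * s ≤ dist p x) : cutoff x s p = 0 := by
  have : 2 ≤ dist p x / s := (le_div_iff₀ hs).2 h
  exact max_eq_left ((min_le_right _ _).trans (by linarith))

lemma abs_cutoff_sub_cutoff_le_one (x p q : X) (s : ℝ) : |cutoff x s p - cutoff x s q| ≤ 1 :=
  abs_sub_le_of_nonneg_of_le cutoff_nonneg cutoff_le_one cutoff_nonneg cutoff_le_one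

lemma abs_cutoff_sub_cutoff_le (hs : 0 < s) (x p q : X) :
    |cutoff x s p - cutoff x s q| ≤ dist p q / s := by
  calc |cutoff x s p - cutoff x s q| ≤ |(2 - dist p x / s) - (2 - dist q x / s)| :=
        Set.abs_projIcc_sub_projIcc zero_le_one
    _ = |dist p x - dist q x| / s := by
        rw [sub_sub_sub_cancel_left, ← sub_div, abs_div, abs_of_pos hs, abs_sub_comm]
    _ ≤ dist p q / s := by
        gcongr
        exact abs_dist_sub_le p q x

/-- The energy of `cutoff x s` charged to a disk with center `y` and radius `t`. Up to the factor
`2` this is the squared radius of the disk at scale `s`, truncated at `1`, if the disk comes close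
to the ball of radius `2 * s` about `x`. -/
noncomputable def diskCharge (x : X) (s : ℝ) (y : X) (t : ℝ) : ℝ :=
  if dist y x ≤ 3 * s + t then 2 * (min t s / s) ^ 2 else 0

lemma diskCharge_nonneg (x : X) (s : ℝ) (y : X) (t : ℝ) : 0 ≤ diskCharge x s y t := by
  unfold diskCharge
  positivity

end Cutoff

namespace IsCirclePacking

open Metric Module

variable {V : Type*} {G : SimpleGraph V} {z : V → EuclideanSpace ℝ (Fin 2)} {rad : V → ℝ}

lemma pairwiseDisjoint_ball (hp : IsCirclePacking G z rad) (A : Set V) :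
    A.PairwiseDisjoint fun v => ball (z v) (rad v) := by
  intro u _ v _ huv
  have hint := Set.disjoint_iff_inter_eq_empty.2 (hp.2.1 u v huv)
  rwa [interior_closedBall _ (hp.1 u).ne', interior_closedBall _ (hp.1 v).ne'] at hint

lemma injective (hp : IsCirclePacking G z rad) : Function.Injective z := by
  intro u v huv
  by_contra hne
  have hdisj := hp.pairwiseDisjoint_ball Set.univ (Set.mem_univ u) (Set.mem_univ v) hne
  rw [Function.onFun, huv] at hdisj
  exact Set.disjoint_left.1 hdisj (mem_ball_self (hp.1 u)) (mem_ball_self (hp.1 v))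

lemma dist_le (hp : IsCirclePacking G z rad) {u v : V} (h : G.Adj u v) :
    dist (z u) (z v) ≤ rad u + rad v := by
  obtain ⟨p, hpu, hpv⟩ := (hp.2.2 u v h.ne).2 h
  exact (dist_triangle_left _ _ p).trans (add_le_add hpu hpv)

lemma sq_cutoff_sub_cutoff_le (hp : IsCirclePacking G z rad) {x : EuclideanSpace ℝ (Fin 2)} {s : ℝ}
    (hs : 0 < s) {a b : V} (h : G.Adj a b) (ha : dist (z a) x < 2 * s) :
    (cutoff x s (z a) - cutoff x s (z b)) ^ 2 ≤
      diskCharge x s (z a) (rad a) + diskCharge x s (z b) (rad b) := by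
  have hrad : 0 < rad a := hp.1 a
  have hca : diskCharge x s (z a) (rad a) = 2 * (min (rad a) s / s) ^ 2 := if_pos (by linarith)
  rcases lt_or_ge s (rad a) with hbig | hsmall
  · have hsq : (cutoff x s (z a) - cutoff x s (z b)) ^ 2 ≤ 1 :=
      (sq_le_one_iff_abs_le_one _).2 (abs_cutoff_sub_cutoff_le_one x _ _ s)
    rw [hca, min_eq_right hbig.le, div_self hs.ne']
    linarith [diskCharge_nonneg x s (z b) (rad b)]
  have hdist := hp.dist_le h
  have hcb : diskCharge x s (z b) (rad b) = 2 * (min (rad b) s / s) ^ 2 :=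
    if_pos (by linarith [dist_triangle_left (z b) x (z a)])
  have hlip : |cutoff x s (z a) - cutoff x s (z b)| ≤ min (rad a) s / s + min (rad b) s / s := by
    rw [min_eq_left hsmall]
    rcases le_total (rad b) s with hb | hb
    · rw [min_eq_left hb, ← add_div]
      exact (abs_cutoff_sub_cutoff_le hs x _ _).trans (by gcongr)
    · rw [min_eq_right hb, div_self hs.ne']
      exact (abs_cutoff_sub_cutoff_le_one x _ _ s).trans (le_add_of_nonneg_left (by positivity))
  calc (cutoff x s (z a) - cutoff x s (z b)) ^ 2
      ≤ (min (rad a) s / s + min (rad b) s / s) ^ 2 := sq_le_sq' (abs_le.1 hlip).1 (abs_le.1 hlip).2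
    _ ≤ 2 * ((min (rad a) s / s) ^ 2 + (min (rad b) s / s) ^ 2) := add_sq_le
    _ = _ := by rw [hca, hcb, mul_add]

lemma sum_diskCharge_le (hp : IsCirclePacking G z rad) [Fintype V] (x : EuclideanSpace ℝ (Fin 2))
    {s : ℝ} (hs : 0 < s) : ∑ v, diskCharge x s (z v) (rad v) ≤ 50 := by
  let A : Finset V := {v | dist (z v) x ≤ 3 * s + rad v}
  have harea : ∑ v ∈ A, min (rad v) s ^ 2 ≤ (3 * s + 2 * s) ^ 2 := by
    simpa only [finrank_euclideanSpace_fin] using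
      sum_min_radius_pow_finrank_le (fun v _ => hp.1 v) (by positivity) hs
        (hp.pairwiseDisjoint_ball A) (fun v hv => (mem_filter.1 hv).2)
  calc ∑ v, diskCharge x s (z v) (rad v) = 2 / s ^ 2 * ∑ v ∈ A, min (rad v) s ^ 2 := by
        rw [mul_sum, sum_filter]
        exact sum_congr rfl fun v _ => if_congr Iff.rfl (by ring) rfl
    _ ≤ 2 / s ^ 2 * (3 * s + 2 * s) ^ 2 := by gcongr
    _ = 50 := by field_simp; norm_num

lemma norm_sq_grad_cutoff_le (hp : IsCirclePacking G z rad) [Fintype V] [DecidableRel G.Adj]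
    {M : ℕ} (hdeg : ∀ v, G.degree v ≤ M) (x : EuclideanSpace ℝ (Fin 2)) {s : ℝ} (hs : 0 < s) :
    ‖grad G fun v => cutoff x s (z v)‖ ^ 2 ≤ 100 * M := by
  have hcharge : ∀ a b, G.Adj a b → (cutoff x s (z a) - cutoff x s (z b)) ^ 2 ≤
      diskCharge x s (z a) (rad a) + diskCharge x s (z b) (rad b) := by
    intro a b hab
    rcases lt_or_ge (dist (z a) x) (2 * s) with ha | ha
    · exact hp.sq_cutoff_sub_cutoff_le hs hab ha
    rcases lt_or_ge (dist (z b) x) (2 * s) with hb | hb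
    · rw [sub_sq_comm, add_comm]
      exact hp.sq_cutoff_sub_cutoff_le hs hab.symm hb
    · rw [cutoff_eq_zero hs ha, cutoff_eq_zero hs hb, sub_zero, zero_pow two_ne_zero]
      exact add_nonneg (diskCharge_nonneg ..) (diskCharge_nonneg ..)
  calc ‖grad G fun v => cutoff x s (z v)‖ ^ 2
      ≤ 2 * M * ∑ v, diskCharge x s (z v) (rad v) :=
        norm_sq_grad_le_of_sq_sub_le hdeg (fun v => diskCharge_nonneg ..) hcharge
    _ ≤ 2 * M * 50 := by gcongr; exact hp.sum_diskCharge_le x hs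
    _ = 100 * M := by ring

end IsCirclePacking

section Spread

/-- A sequence of balls with increasing radii, each of which has its center far from all earlier
balls relative to their radii. -/
structure IsSpread {X ι : Type*} [PseudoMetricSpace X] [LinearOrder ι] (c : ι → X) (s : ι → ℝ) :
    Prop where
  radius_pos : ∀ i, 0 < s i
  radius_mono : Monotone s
  le_dist : ∀ i j, i < j → 8 * s i ≤ dist (c j) (c i)

lemma IsSpread.cons {X : Type*} [PseudoMetricSpace X] {J : ℕ} {c : Fin J → X} {s : Fin J → ℝ}
    (h : IsSpread c s) {c₀ : X} {s₀ : ℝ} (hs₀ : 0 < s₀) (hle : ∀ j, s₀ ≤ s j)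
    (hfar : ∀ j, 8 * s₀ ≤ dist (c j) c₀) :
    IsSpread (Fin.cons c₀ c : Fin (J + 1) → X) (Fin.cons s₀ s : Fin (J + 1) → ℝ) where
  radius_pos := Fin.cases hs₀ h.radius_pos
  radius_mono i j hij := by
    cases i using Fin.cases with
    | zero => exact Fin.cases le_rfl hle j
    | succ i =>
      cases j using Fin.cases with
      | zero => exact absurd hij (Fin.succ_pos i).not_ge
      | succ j => exact h.radius_mono (Fin.succ_le_succ_iff.1 hij)
  le_dist i j hij := by
    cases j using Fin.cases with
    | zero => exact absurd hij (Fin.zero_le i).not_gt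
    | succ j =>
      cases i using Fin.cases with
      | zero => exact hfar j
      | succ i => exact h.le_dist i j (Fin.succ_lt_succ_iff.1 hij)

lemma exists_minimal_radius {X V : Type*} [MetricSpace X] {z : V → X} (hz : Function.Injective z)
    {U : Finset V} {m : ℕ} (hm : 2 ≤ m) (hU : m ≤ #U) :
    ∃ x ∈ U, ∃ s > 0, m ≤ #{v ∈ U | dist (z v) (z x) ≤ s} ∧
      ∀ y ∈ U, #{v ∈ U | dist (z v) (z y) < s} < m := by
  let P : Finset (V × V) :=
    {a ∈ U ×ˢ U | m ≤ #{v ∈ U | dist (z v) (z a.1) ≤ dist (z a.2) (z a.1)}}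
  have hP : ∀ y ∈ U, ∀ Q ⊆ U, m ≤ #Q → ∃ w ∈ Q, (y, w) ∈ P := by
    intro y hy Q hQU hQ
    obtain ⟨w, hwQ, hw⟩ := Q.exists_max_image (fun v => dist (z v) (z y))
      (card_pos.1 (two_pos.trans_le (hm.trans hQ)))
    refine ⟨w, hwQ, mem_filter.2 ⟨mem_product.2 ⟨hy, hQU hwQ⟩, hQ.trans (card_le_card ?_)⟩⟩
    exact fun v hv => mem_filter.2 ⟨hQU hv, hw v hv⟩
  obtain ⟨y₀, hy₀⟩ := card_pos.1 (two_pos.trans_le (hm.trans hU))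
  obtain ⟨w₀, -, hw₀⟩ := hP y₀ hy₀ U Subset.rfl hU
  obtain ⟨⟨x, w⟩, hxw, hmin⟩ := P.exists_min_image (fun a => dist (z a.2) (z a.1)) ⟨_, hw₀⟩
  have hball : m ≤ #{v ∈ U | dist (z v) (z x) ≤ dist (z w) (z x)} := (mem_filter.1 hxw).2
  refine ⟨x, (mem_product.1 (mem_filter.1 hxw).1).1, _, ?_, hball, fun y hy => ?_⟩
  · refine dist_nonneg.lt_of_ne' fun h0 => ?_
    have hsub : {v ∈ U | dist (z v) (z x) ≤ dist (z w) (z x)} ⊆ {x} := by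
      intro v hv
      rw [h0, mem_filter, dist_le_zero] at hv
      exact mem_singleton.2 (hz hv.2)
    exact absurd (card_le_card hsub) (by rw [card_singleton]; lia)
  · by_contra! hcard
    obtain ⟨w', hw', hyw'⟩ := hP y hy _ (filter_subset _ _) hcard
    exact ((mem_filter.1 hw').2.trans_le (hmin _ hyw')).false

open Module in
lemma exists_isSpread {E V : Type*} [NormedAddCommGroup E] [NormedSpace ℝ E]
    [FiniteDimensional ℝ E] {z : V → E} (hz : Function.Injective z) {m : ℕ} (hm : 2 ≤ m) (J : ℕ)
    (W : Finset V) (hW : J * (17 ^ finrank ℝ E * m) ≤ #W) :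
    ∃ (x : Fin J → V) (s : Fin J → ℝ), (∀ j, x j ∈ W) ∧ IsSpread (z ∘ x) s ∧
      ∀ j, m ≤ #{v ∈ W | dist (z v) (z (x j)) ≤ s j ∧
        ∀ i < j, 8 * s i ≤ dist (z v) (z (x i))} := by
  induction J generalizing W with
  | zero =>
    exact ⟨Fin.elim0, Fin.elim0, fun j => j.elim0,
      ⟨fun i => i.elim0, fun i => i.elim0, fun i => i.elim0⟩, fun j => j.elim0⟩
  | succ J ih =>
    rw [add_one_mul] at hW
    have hmW : m ≤ #W := (Nat.le_mul_of_pos_left m (by positivity)).trans (le_of_add_le_right hW)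
    obtain ⟨x₀, hx₀, s₀, hs₀, hball, hmin⟩ := exists_minimal_radius hz hm hmW
    let U : Finset V := {v ∈ W | 8 * s₀ ≤ dist (z v) (z x₀)}
    have hnear : #{v ∈ W | ¬ 8 * s₀ ≤ dist (z v) (z x₀)} ≤ 17 ^ finrank ℝ E * m := by
      refine card_le_mul_of_card_dist_lt_le (y := z) (x := z x₀) (K := 8) hs₀ (fun v hv => ?_)
        fun v hv => ?_
      · exact (not_le.1 (mem_filter.1 hv).2).le
      · exact (card_le_card (filter_subset_filter _ (filter_subset _ _))).trans
          (hmin v (mem_filter.1 hv).1).le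
    have hU : J * (17 ^ finrank ℝ E * m) ≤ #U := by
      have := card_filter_add_card_filter_not (s := W) fun v => 8 * s₀ ≤ dist (z v) (z x₀)
      lia
    obtain ⟨x, s, hxU, hspread, hcluster⟩ := ih U hU
    have hle : ∀ j, s₀ ≤ s j := by
      intro j
      by_contra! hlt
      refine (hcluster j).not_gt ((card_le_card fun v hv => ?_).trans_lt
        (hmin (x j) (mem_filter.1 (hxU j)).1))
      simp only [U, mem_filter] at hv ⊢
      exact ⟨hv.1.1, hv.2.1.trans_lt hlt⟩
    refine ⟨Fin.cons x₀ x, Fin.cons s₀ s, Fin.cases hx₀ fun j => (mem_filter.1 (hxU j)).1, ?_, ?_⟩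
    · rw [Fin.comp_cons]
      exact hspread.cons hs₀ hle fun j => (mem_filter.1 (hxU j)).2
    · refine Fin.cases ?_ fun j => ?_
      · simpa using hball
      · refine (hcluster j).trans (card_le_card fun v hv => ?_)
        simp only [U, mem_filter] at hv ⊢
        exact ⟨hv.1.1, hv.2.1, Fin.cases (fun _ => hv.1.2)
          fun i hij => hv.2.2 i (Fin.succ_lt_succ_iff.1 hij)⟩

end Spread

section Holes

open Module

variable {X ι : Type*} [PseudoMetricSpace X] [LinearOrder ι] [Fintype ι] {c : ι → X} {s : ι → ℝ}

/-- The indices `i < j` whose ball of radius `4 * s i` has to be cut out of the ball of radius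
`2 * s j` about `c j`, because it may meet that ball and is not contained in the ball of radius
`4 * s i'` about `c i'` for any index `i'` in between. -/
noncomputable def holes (c : ι → X) (s : ι → ℝ) (j : ι) : Finset ι :=
  {i | i < j ∧ dist (c i) (c j) < 2 * s j + 4 * s i ∧
    ∀ i', i < i' → i' < j → 4 * s i' < dist (c i) (c i') + 4 * s i}

/-- The cutoff at the `j`-th ball with the holes cut out, so that the functions of different indices
have disjoint supports. -/
noncomputable def bump (c : ι → X) (s : ι → ℝ) (j : ι) (p : X) : ℝ :=
  max 0 (cutoff (c j) (s j) p - ∑ i ∈ holes c s j, cutoff (c i) (4 * s i) p)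

namespace IsSpread

lemma bump_eq_zero (h : IsSpread c s) {i j : ι} (hij : i < j) {p : X}
    (hp : dist p (c i) ≤ 4 * s i) : bump c s j p = 0 := by
  induction i using WellFoundedGT.induction with
  | ind i ih =>
    have hcut : cutoff (c j) (s j) p ≤ 1 := cutoff_le_one
    have hholes : ∀ i ∈ holes c s j, 0 ≤ cutoff (c i) (4 * s i) p := fun _ _ => cutoff_nonneg
    have hsi : 0 < s i := h.radius_pos i
    by_cases hi : i ∈ holes c s j
    · have hone : cutoff (c i) (4 * s i) p = 1 := cutoff_eq_one (by positivity) hp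
      exact max_eq_left (by linarith [single_le_sum hholes hi])
    rcases le_or_gt (2 * s j) (dist p (c j)) with hj | hj
    · rw [bump, cutoff_eq_zero (h.radius_pos j) hj, zero_sub]
      exact max_eq_left (neg_nonpos.2 (sum_nonneg hholes))
    have hmeet : dist (c i) (c j) < 2 * s j + 4 * s i := by
      linarith [dist_triangle_left (c i) (c j) p]
    obtain ⟨i', hii', hi'j, hcontained⟩ :
        ∃ i', i < i' ∧ i' < j ∧ dist (c i) (c i') + 4 * s i ≤ 4 * s i' := by
      simpa [holes, hij, hmeet] using hi
    exact ih i' hii' hi'j (by linarith [dist_triangle p (c i) (c i')])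

lemma pairwise_disjoint_support_bump (h : IsSpread c s) :
    Pairwise fun i j => Disjoint (bump c s i).support (bump c s j).support := by
  have hlt : ∀ i j, i < j → Disjoint (bump c s i).support (bump c s j).support := by
    intro i j hij
    refine Set.disjoint_left.2 fun p hi hj => ?_
    have hfar : 4 * s i < dist p (c i) := not_le.1 fun hp => hj (h.bump_eq_zero hij hp)
    have hsi : 0 < s i := h.radius_pos i
    refine hi (max_eq_left ?_)
    rw [cutoff_eq_zero hsi (by linarith), zero_sub]
    exact neg_nonpos.2 (sum_nonneg fun _ _ => cutoff_nonneg)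
  exact fun i j hij => hij.lt_or_gt.elim (hlt i j) fun hji => (hlt j i hji).symm

lemma bump_eq_one (h : IsSpread c s) {j : ι} {p : X} (hp : dist p (c j) ≤ s j)
    (hfar : ∀ i < j, 8 * s i ≤ dist p (c i)) : bump c s j p = 1 := by
  have hholes : ∀ i ∈ holes c s j, cutoff (c i) (4 * s i) p = 0 := by
    intro i hi
    have hsi : 0 < s i := h.radius_pos i
    exact cutoff_eq_zero (by positivity) (by linarith [hfar i (mem_filter.1 hi).2.1])
  rw [bump, cutoff_eq_one (h.radius_pos j) hp, sum_eq_zero hholes, sub_zero,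
    max_eq_right zero_le_one]

lemma sum_card_small_holes_le (h : IsSpread c s) :
    ∑ j, #{i ∈ holes c s j | 8 * s i < s j} ≤ Fintype.card ι := by
  have hlt : ∀ i j j', i ∈ holes c s j → 8 * s i < s j → i ∈ holes c s j' → ¬ j < j' := by
    intro i j j' hj hsmall hj' hjj'
    obtain ⟨hij, hmeet, -⟩ := (mem_filter.1 hj).2
    have hescape := (mem_filter.1 hj').2.2.2 j hij hjj'
    linarith [h.radius_pos i]
  rw [← card_biUnion]
  · exact card_le_univ _
  · refine fun j _ j' _ hjj' => disjoint_left.2 fun i hi hi' => ?_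
    rw [mem_filter] at hi hi'
    exact hjj'.lt_or_gt.elim (hlt i j j' hi.1 hi.2 hi'.1) (hlt i j' j hi'.1 hi'.2 hi.1)

lemma card_large_holes_le {E : Type*} [NormedAddCommGroup E] [NormedSpace ℝ E]
    [FiniteDimensional ℝ E] {c : ι → E} (h : IsSpread c s) (j : ι) :
    #{i ∈ holes c s j | ¬ 8 * s i < s j} ≤ 13 ^ finrank ℝ E := by
  refine card_le_of_pairwise_le_dist (y := c) (x := c j) (K := 6) (h.radius_pos j)
    (fun i hi i' hi' hne => ?_) fun i hi => ?_
  · have hlarge : s j ≤ 8 * s i := not_lt.1 (mem_filter.1 hi).2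
    have hlarge' : s j ≤ 8 * s i' := not_lt.1 (mem_filter.1 hi').2
    rcases hne.lt_or_gt with hlt | hlt
    · exact (hlarge.trans (h.le_dist i i' hlt)).trans_eq (dist_comm _ _)
    · exact hlarge'.trans (h.le_dist i' i hlt)
  · obtain ⟨hij, hmeet, -⟩ := (mem_filter.1 (mem_filter.1 hi).1).2
    push_cast
    linarith [h.radius_mono hij.le]

lemma sum_card_holes_le {E : Type*} [NormedAddCommGroup E] [NormedSpace ℝ E]
    [FiniteDimensional ℝ E] {c : ι → E} (h : IsSpread c s) :
    ∑ j, #(holes c s j) ≤ (13 ^ finrank ℝ E + 1) * Fintype.card ι := by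
  calc ∑ j, #(holes c s j)
      = ∑ j, #{i ∈ holes c s j | 8 * s i < s j} + ∑ j, #{i ∈ holes c s j | ¬ 8 * s i < s j} := by
        rw [← sum_add_distrib]
        exact sum_congr rfl fun j _ => (card_filter_add_card_filter_not _).symm
    _ ≤ Fintype.card ι + ∑ _j : ι, 13 ^ finrank ℝ E :=
        add_le_add h.sum_card_small_holes_le (sum_le_sum fun j _ => h.card_large_holes_le j)
    _ = (13 ^ finrank ℝ E + 1) * Fintype.card ι := by
        rw [sum_const, card_univ, smul_eq_mul]
        ring

end IsSpread

end Holes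

section Bumps

lemma card_le_two_mul_card_le_two_mul {ι : Type*} [Fintype ι] {f : ι → ℕ} {N : ℕ}
    (hf : ∑ i, f i ≤ N * Fintype.card ι) :
    Fintype.card ι ≤ 2 * #{i | f i ≤ 2 * N} := by
  have hmarkov : #{i | ¬ f i ≤ 2 * N} * (2 * N + 1) ≤ N * Fintype.card ι :=
    (card_nsmul_le_sum _ _ _ fun i hi => not_le.1 (mem_filter.1 hi).2).trans
      ((sum_le_sum_of_subset (filter_subset _ _)).trans hf)
  have hsplit := card_filter_add_card_filter_not (s := (univ : Finset ι)) fun i => f i ≤ 2 * N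
  rw [card_univ] at hsplit
  nlinarith

lemma card_filter_ne_zero_le_one {ι α : Type*} {g : ι → α → ℝ}
    (hg : Pairwise fun i j => Disjoint (g i).support (g j).support) (A : Finset ι) (a : α) :
    #{i ∈ A | g i a ≠ 0} ≤ 1 := by
  refine card_le_one.2 fun i hi j hj => ?_
  by_contra hij
  exact Set.disjoint_left.1 (hg hij) (mem_filter.1 hi).2 (mem_filter.1 hj).2

variable {V : Type*} {G : SimpleGraph V} {z : V → EuclideanSpace ℝ (Fin 2)} {rad : V → ℝ}
  [Fintype V] [DecidableRel G.Adj] {M : ℕ}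

lemma IsCirclePacking.norm_sq_grad_bump_le (hp : IsCirclePacking G z rad)
    (hdeg : ∀ v, G.degree v ≤ M) {ι : Type*} [LinearOrder ι] [Fintype ι]
    {c : ι → EuclideanSpace ℝ (Fin 2)} {s : ι → ℝ} (hs : ∀ i, 0 < s i) (j : ι) :
    ‖grad G fun v => bump c s j (z v)‖ ^ 2 ≤ (#(holes c s j) + 1) ^ 2 * (100 * M) := by
  have hcutoff : ∀ x (t : ℝ), 0 < t → ‖grad G fun v => cutoff x t (z v)‖ ≤ √(100 * M) :=
    fun x t ht => Real.le_sqrt_of_sq_le (hp.norm_sq_grad_cutoff_le hdeg x ht)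
  let f : V → ℝ :=
    (fun v => cutoff (c j) (s j) (z v)) - ∑ i ∈ holes c s j, fun v => cutoff (c i) (4 * s i) (z v)
  have hbump : ∀ v, bump c s j (z v) = max (f v) 0 := by
    intro v
    simp only [f, Pi.sub_apply, Finset.sum_apply, bump, max_comm]
  have hnorm : ‖grad G fun v => bump c s j (z v)‖ ≤ (#(holes c s j) + 1) * √(100 * M) := by
    calc ‖grad G fun v => bump c s j (z v)‖ ≤ ‖grad G f‖ := norm_grad_le_norm_grad fun a b _ => by
          simpa only [hbump] using abs_max_sub_max_le_abs _ _ _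
      _ ≤ √(100 * M) + ∑ _i ∈ holes c s j, √(100 * M) := by
          rw [map_sub, map_sum]
          refine (norm_sub_le _ _).trans (add_le_add (hcutoff _ _ (hs j))
            (norm_sum_le_of_le _ fun i _ => hcutoff _ _ (by linarith [hs i])))
      _ = (#(holes c s j) + 1) * √(100 * M) := by
          rw [sum_const, nsmul_eq_mul]
          ring
  calc ‖grad G fun v => bump c s j (z v)‖ ^ 2 ≤ ((#(holes c s j) + 1) * √(100 * M)) ^ 2 := by
        gcongr
    _ = (#(holes c s j) + 1 : ℝ) ^ 2 * (100 * M) := by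
        rw [mul_pow, Real.sq_sqrt (by positivity)]

/- The constants are `289 = 17 ^ 2` from `exists_isSpread` and `341 = 2 * (13 ^ 2 + 1) + 1`: half of
the `4 * k` bumps have at most `2 * (13 ^ 2 + 1)` holes, twice the bound on the average, and at most
one of these has to be discarded for not vanishing at `v₀`. -/
lemma IsCirclePacking.exists_bumps (hp : IsCirclePacking G z rad) (hdeg : ∀ v, G.degree v ≤ M)
    {m k : ℕ} (hm : 2 ≤ m) (hk : 1 ≤ k) {W : Finset V} (hW : 4 * k * (289 * m) ≤ #W) (v₀ : V) :
    ∃ g : Fin k → V → ℝ, (Pairwise fun i j => Disjoint (g i).support (g j).support) ∧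
      ∀ i, g i v₀ = 0 ∧ ‖grad G (g i)‖ ^ 2 ≤ 341 ^ 2 * (100 * M) ∧ m ≤ #{w ∈ W | g i w = 1} := by
  obtain ⟨x, s, -, hspread, hcluster⟩ := exists_isSpread hp.injective hm (4 * k) W
    (by rw [finrank_euclideanSpace_fin]; exact hW)
  let g (j : Fin (4 * k)) (v : V) : ℝ := bump (z ∘ x) s j (z v)
  have hdisj : Pairwise fun i j => Disjoint (g i).support (g j).support :=
    fun i j hij => (hspread.pairwise_disjoint_support_bump hij).preimage z
  have hfew := card_le_two_mul_card_le_two_mul hspread.sum_card_holes_le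
  rw [Fintype.card_fin, finrank_euclideanSpace_fin] at hfew
  let fewHoles : Finset (Fin (4 * k)) := {j | #(holes (z ∘ x) s j) ≤ 340}
  let good : Finset (Fin (4 * k)) := {j ∈ fewHoles | g j v₀ = 0}
  have hgood : k ≤ #good := by
    have hsplit : #good + #{j ∈ fewHoles | g j v₀ ≠ 0} = #fewHoles :=
      card_filter_add_card_filter_not fun j => g j v₀ = 0
    have hone := card_filter_ne_zero_le_one hdisj fewHoles v₀
    lia
  obtain ⟨e⟩ : Nonempty (Fin k ↪ good) :=
    Function.Embedding.nonempty_of_card_le (by simpa using hgood)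
  refine ⟨fun i => g (e i), fun i j hij => hdisj fun h => hij (e.injective (Subtype.ext h)),
    fun i => ?_⟩
  obtain ⟨hi, hv₀⟩ := mem_filter.1 (e i).2
  have hholes : #(holes (z ∘ x) s (e i)) + 1 ≤ 341 := Nat.succ_le_succ (mem_filter.1 hi).2
  refine ⟨hv₀, (hp.norm_sq_grad_bump_le hdeg hspread.radius_pos _).trans ?_, ?_⟩
  · gcongr
    exact_mod_cast hholes
  · refine (hcluster (e i)).trans (card_le_card fun v hv => ?_)
    obtain ⟨hvW, hv, hfar⟩ := mem_filter.1 hv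
    exact mem_filter.2 ⟨hvW, hspread.bump_eq_one hv hfar⟩

end Bumps

section DisjointSupport

open Module
open scoped RealInnerProductSpace

variable {V ι : Type*} [Fintype ι] {g : ι → V → ℝ}

lemma sq_sum_mul_eq_sum_of_disjoint_support
    (hg : Pairwise fun i j => Disjoint (g i).support (g j).support) (a : ι → ℝ) (v : V) :
    (∑ i, a i * g i v) ^ 2 = ∑ i, a i ^ 2 * g i v ^ 2 := by
  by_cases hv : ∃ i, g i v ≠ 0
  · obtain ⟨i, hi⟩ := hv
    have hzero : ∀ j, j ≠ i → g j v = 0 := fun j hji =>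
      not_not.1 fun hj => Set.disjoint_left.1 (hg hji) hj hi
    rw [Fintype.sum_eq_single i fun j hj => by rw [hzero j hj, mul_zero],
      Fintype.sum_eq_single i fun j hj => by rw [hzero j hj, zero_pow two_ne_zero, mul_zero],
      mul_pow]
  · push Not at hv
    simp [hv]

lemma sq_sum_mul_sub_le_of_disjoint_support
    (hg : Pairwise fun i j => Disjoint (g i).support (g j).support) (a : ι → ℝ) (u v : V) :
    (∑ i, a i * (g i u - g i v)) ^ 2 ≤ 2 * ∑ i, a i ^ 2 * (g i u - g i v) ^ 2 := by
  classical
  let A : Finset ι := {i | g i u ≠ 0 ∨ g i v ≠ 0}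
  have hA : #A ≤ 2 := by
    rw [show A = _ from filter_or ..]
    exact (card_union_le _ _).trans <|
      add_le_add (card_filter_ne_zero_le_one hg _ u) (card_filter_ne_zero_le_one hg _ v)
  have hzero : ∀ i ∉ A, g i u - g i v = 0 := by
    intro i hi
    obtain ⟨hu, hv⟩ : g i u = 0 ∧ g i v = 0 := by simpa [A] using hi
    rw [hu, hv, sub_zero]
  calc (∑ i, a i * (g i u - g i v)) ^ 2 = (∑ i ∈ A, a i * (g i u - g i v)) ^ 2 := by
        rw [sum_subset (subset_univ A) fun i _ hi => by rw [hzero i hi, mul_zero]]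
    _ ≤ #A * ∑ i ∈ A, (a i * (g i u - g i v)) ^ 2 := sq_sum_le_card_mul_sum_sq
    _ ≤ 2 * ∑ i, (a i * (g i u - g i v)) ^ 2 := by
        gcongr
        · exact_mod_cast hA
        · exact subset_univ A
    _ = 2 * ∑ i, a i ^ 2 * (g i u - g i v) ^ 2 := by simp only [mul_pow]

variable [Fintype V] {G : SimpleGraph V} [DecidableRel G.Adj]

lemma norm_sq_sum_smul_grad_le_of_disjoint_support
    (hg : Pairwise fun i j => Disjoint (g i).support (g j).support) {C : ℝ}
    (hC : ∀ i, ‖grad G (g i)‖ ^ 2 ≤ C) (a : ι → ℝ) :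
    ‖∑ i, a i • grad G (g i)‖ ^ 2 ≤ 2 * C * ∑ i, a i ^ 2 := by
  calc ‖∑ i, a i • grad G (g i)‖ ^ 2
      = ∑ d : G.Dart, (∑ i, a i * (g i d.fst - g i d.snd)) ^ 2 := by
        simp [EuclideanSpace.norm_sq_eq]
    _ ≤ ∑ d : G.Dart, 2 * ∑ i, a i ^ 2 * (g i d.fst - g i d.snd) ^ 2 :=
        sum_le_sum fun d _ => sq_sum_mul_sub_le_of_disjoint_support hg a _ _
    _ = 2 * ∑ i, a i ^ 2 * ‖grad G (g i)‖ ^ 2 := by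
        simp only [norm_sq_grad, mul_sum]
        exact sum_comm
    _ ≤ 2 * ∑ i, a i ^ 2 * C := by
        gcongr with i
        exact hC i
    _ = 2 * C * ∑ i, a i ^ 2 := by
        rw [← sum_mul]
        ring

lemma mul_sum_sq_le_sum_inner_sq_of_disjoint_support
    (hg : Pairwise fun i j => Disjoint (g i).support (g j).support) {W : Finset V} {m : ℕ}
    (hm : ∀ i, m ≤ #{w ∈ W | g i w = 1}) {v₀ : V} (hv₀ : ∀ i, g i v₀ = 0)
    {θ : V → EuclideanSpace ℝ G.Dart} (hθ : ∀ w ∈ W, ∀ f, ⟪θ w, grad G f⟫ = f w - f v₀)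
    (a : ι → ℝ) :
    m * ∑ i, a i ^ 2 ≤ ∑ w ∈ W, ⟪θ w, ∑ i, a i • grad G (g i)⟫ ^ 2 := by
  calc m * ∑ i, a i ^ 2 ≤ ∑ i, a i ^ 2 * ∑ w ∈ W, g i w ^ 2 := by
        rw [mul_comm, sum_mul]
        gcongr with i
        calc (m : ℝ) ≤ ∑ w ∈ W with g i w = 1, (1 : ℝ) := by simpa using hm i
          _ = ∑ w ∈ W with g i w = 1, g i w ^ 2 := sum_congr rfl fun w hw => by
              rw [(mem_filter.1 hw).2, one_pow]
          _ ≤ ∑ w ∈ W, g i w ^ 2 :=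
              sum_le_sum_of_subset_of_nonneg (filter_subset _ _) fun _ _ _ => sq_nonneg _
    _ = ∑ w ∈ W, ∑ i, a i ^ 2 * g i w ^ 2 := by
        simp only [mul_sum]
        exact sum_comm
    _ = ∑ w ∈ W, ⟪θ w, ∑ i, a i • grad G (g i)⟫ ^ 2 := sum_congr rfl fun w hw => by
        simp only [inner_sum, real_inner_smul_right, hθ w hw, hv₀, sub_zero]
        exact (sq_sum_mul_eq_sum_of_disjoint_support hg a w).symm

lemma exists_finrank_eq_forall_mem_mul_norm_sq_le_sum_inner_sq
    (hg : Pairwise fun i j => Disjoint (g i).support (g j).support) {C : ℝ} (hC₀ : 0 < C)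
    (hC : ∀ i, ‖grad G (g i)‖ ^ 2 ≤ C) {W : Finset V} {m : ℕ} (hm₀ : 0 < m)
    (hm : ∀ i, m ≤ #{w ∈ W | g i w = 1}) {v₀ : V} (hv₀ : ∀ i, g i v₀ = 0)
    {θ : V → EuclideanSpace ℝ G.Dart} (hθ : ∀ w ∈ W, ∀ f, ⟪θ w, grad G f⟫ = f w - f v₀) :
    ∃ S : Submodule ℝ (EuclideanSpace ℝ G.Dart), finrank ℝ S = Fintype.card ι ∧
      ∀ F ∈ S, m / (2 * C) * ‖F‖ ^ 2 ≤ ∑ w ∈ W, ‖⟪θ w, F⟫‖ ^ 2 := by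
  have hlower := mul_sum_sq_le_sum_inner_sq_of_disjoint_support hg hm hv₀ hθ
  have hindep : LinearIndependent ℝ fun i => grad G (g i) := by
    refine Fintype.linearIndependent_iff.2 fun a ha => ?_
    have hsum : m * ∑ i, a i ^ 2 ≤ 0 := by simpa [ha] using hlower a
    have hsum : ∑ i, a i ^ 2 ≤ 0 := nonpos_of_mul_nonpos_right hsum (by exact_mod_cast hm₀)
    intro i
    exact pow_eq_zero_iff two_ne_zero |>.1 <|
      le_antisymm ((single_le_sum (fun j _ => sq_nonneg (a j)) (mem_univ i)).trans hsum)
        (sq_nonneg _)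
  refine ⟨Submodule.span ℝ (Set.range fun i => grad G (g i)), finrank_span_eq_card hindep, ?_⟩
  intro F hF
  obtain ⟨a, rfl⟩ := (Submodule.mem_span_range_iff_exists_fun ℝ).1 hF
  calc m / (2 * C) * ‖∑ i, a i • grad G (g i)‖ ^ 2 ≤ m / (2 * C) * (2 * C * ∑ i, a i ^ 2) := by
        gcongr
        exact norm_sq_sum_smul_grad_le_of_disjoint_support hg hC a
    _ = m * ∑ i, a i ^ 2 := by field_simp
    _ ≤ ∑ w ∈ W, ‖⟪θ w, ∑ i, a i • grad G (g i)⟫‖ ^ 2 := by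
        simpa only [Real.norm_eq_abs, sq_abs] using hlower a

end DisjointSupport

section Growth

open Module
open scoped RealInnerProductSpace

variable {V : Type*} {G : SimpleGraph V} [Fintype V] [DecidableRel G.Adj] {M : ℕ}

lemma one_le_mul_norm_sq_of_forall_inner_grad_eq_sub (hdeg : ∀ v, G.degree v ≤ M) {u v : V}
    (huv : u ≠ v) {θ : EuclideanSpace ℝ G.Dart} (hθ : ∀ f, ⟪θ, grad G f⟫ = f v - f u) :
    1 ≤ 2 * M * ‖θ‖ ^ 2 := by
  classical
  let f : V → ℝ := Pi.single v 1
  have hf : ‖grad G f‖ ^ 2 ≤ 2 * M := by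
    have hnonneg : ∀ w, 0 ≤ f w := fun w => by by_cases hw : w = v <;> simp [f, hw]
    have hle : ∀ w, f w ≤ 1 := fun w => by by_cases hw : w = v <;> simp [f, hw]
    simpa [f] using norm_sq_grad_le_of_sq_sub_le hdeg hnonneg fun a b _ => by
      nlinarith [hnonneg a, hnonneg b, hle a, hle b]
  have hflow : ⟪θ, grad G f⟫ = 1 := by simp [hθ, f, huv]
  calc (1 : ℝ) ≤ ‖θ‖ ^ 2 * ‖grad G f‖ ^ 2 := by
        rw [← mul_pow, one_le_sq_iff₀ (by positivity), ← hflow]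
        exact real_inner_le_norm _ _
    _ ≤ ‖θ‖ ^ 2 * (2 * M) := by gcongr
    _ = 2 * M * ‖θ‖ ^ 2 := mul_comm _ _

lemma div_two_mul_le_cast_div {n q : ℕ} (hq : 0 < q) (hqn : q ≤ n) :
    (n : ℝ) / (2 * q) ≤ (n / q : ℕ) := by
  have hpos : 1 ≤ n / q := (Nat.one_le_div_iff hq).2 hqn
  have hlt : n < q * (n / q + 1) := Nat.lt_mul_div_succ n hq
  rw [div_le_iff₀ (by positivity)]
  exact_mod_cast (show n ≤ n / q * (2 * q) by nlinarith)

lemma mul_log_le_sum_cast_div (n : ℕ) {N : ℕ} (hN : 0 < N) :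
    n * Real.log (n / N) ≤ 2 * N * ∑ l : Fin (n / N), ((n / (N * (l + 1)) : ℕ) : ℝ) := by
  have hlog : Real.log (n / N) ≤ ∑ l : Fin (n / N), ((l + 1 : ℕ) : ℝ)⁻¹ := by
    have := log_le_harmonic_floor ((n : ℝ) / N) (by positivity)
    rw [Nat.floor_div_eq_div, harmonic] at this
    rw [Fin.sum_univ_eq_sum_range fun l => ((l + 1 : ℕ) : ℝ)⁻¹]
    simpa only [Rat.cast_sum, Rat.cast_inv, Rat.cast_natCast] using this
  calc n * Real.log (n / N) ≤ n * ∑ l : Fin (n / N), ((l + 1 : ℕ) : ℝ)⁻¹ := by gcongr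
    _ = 2 * N * ∑ l : Fin (n / N), (n : ℝ) / (2 * (N * (l + 1) : ℕ)) := by
        rw [mul_sum, mul_sum]
        refine sum_congr rfl fun l _ => ?_
        push_cast
        field_simp
    _ ≤ 2 * N * ∑ l : Fin (n / N), ((n / (N * (l + 1)) : ℕ) : ℝ) := by
        gcongr with l
        refine div_two_mul_le_cast_div (by positivity) ?_
        exact (Nat.mul_le_mul_left N l.2).trans (Nat.mul_div_le n N)

variable {z : V → EuclideanSpace ℝ (Fin 2)} {rad : V → ℝ} {W : Finset V} {v₀ : V}
  {θ : V → EuclideanSpace ℝ G.Dart}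

/- Each of the `k` bumps equals `1` on `2 * (#W / (2312 * k))` points of `W`, the factor `2` being
there to meet the lower bound `2 ≤ m` of `exists_bumps`; this gives `2312 = 2 * (4 * 289)`. -/
lemma IsCirclePacking.exists_finrank_eq_forall_mem_mul_norm_sq_le (hp : IsCirclePacking G z rad)
    (hdeg : ∀ v, G.degree v ≤ M) (hM : 0 < M)
    (hθ : ∀ w ∈ W, ∀ f, ⟪θ w, grad G f⟫ = f w - f v₀) {k : ℕ} (hk : 1 ≤ k) (hkW : 2312 * k ≤ #W) :
    ∃ S : Submodule ℝ (EuclideanSpace ℝ G.Dart), finrank ℝ S = k ∧ ∀ F ∈ S,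
      (#W / (2312 * k) : ℕ) / (341 ^ 2 * (100 * M)) * ‖F‖ ^ 2 ≤ ∑ w ∈ W, ‖⟪θ w, F⟫‖ ^ 2 := by
  have hm : 1 ≤ #W / (2312 * k) := (Nat.one_le_div_iff (by positivity)).2 hkW
  have hW : 4 * k * (289 * (2 * (#W / (2312 * k)))) ≤ #W :=
    (Nat.mul_div_le #W (2312 * k)).trans_eq' (by ring)
  obtain ⟨g, hg, hbump⟩ := hp.exists_bumps hdeg (by lia) hk hW v₀
  simpa only [Fintype.card_fin, Nat.cast_mul, Nat.cast_ofNat,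
    mul_div_mul_left _ _ (two_ne_zero (α := ℝ))] using
    exists_finrank_eq_forall_mem_mul_norm_sq_le_sum_inner_sq hg (by positivity)
      (fun i => (hbump i).2.1) (by lia) (fun i => (hbump i).2.2) (fun i => (hbump i).1) hθ

lemma IsCirclePacking.card_mul_log_le_sum_norm_sq (hp : IsCirclePacking G z rad)
    (hdeg : ∀ v, G.degree v ≤ M) (hM : 0 < M)
    (hθ : ∀ w ∈ W, ∀ f, ⟪θ w, grad G f⟫ = f w - f v₀) :
    #W * Real.log (#W / 2312) ≤ 4624 * (341 ^ 2 * (100 * M)) * ∑ w ∈ W, ‖θ w‖ ^ 2 := by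
  have hsub (l : Fin (#W / 2312)) := hp.exists_finrank_eq_forall_mem_mul_norm_sq_le hdeg hM hθ
    l.1.succ_pos ((Nat.mul_le_mul_left _ l.2).trans (Nat.mul_div_le _ _))
  choose S hS hSle using hsub
  have htrace := sum_le_sum_norm_sq_of_lt_finrank W θ S
    (fun l => by rw [hS]; exact l.1.lt_succ_self) _ hSle
  calc #W * Real.log (#W / 2312)
      ≤ 2 * 2312 * ∑ l : Fin (#W / 2312), ((#W / (2312 * (l + 1)) : ℕ) : ℝ) :=
        mul_log_le_sum_cast_div #W (N := 2312) (by norm_num)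
    _ = 4624 * (341 ^ 2 * (100 * M)) *
        ∑ l : Fin (#W / 2312), (#W / (2312 * (l + 1)) : ℕ) / (341 ^ 2 * (100 * (M : ℝ))) := by
        rw [← sum_div]
        field_simp
        ring
    _ ≤ 4624 * (341 ^ 2 * (100 * M)) * ∑ w ∈ W, ‖θ w‖ ^ 2 := by gcongr

lemma IsCirclePacking.log_card_le_of_effRes_le (hp : IsCirclePacking G z rad) [DecidableEq V]
    (hG : G.Connected) (hdeg : ∀ v, G.degree v ≤ M) (hM : 0 < M) {ρ : ℝ} (hρ : 0 ≤ ρ)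
    (hW : ∀ w ∈ W, effRes G v₀ w ≤ ENNReal.ofReal ρ) :
    Real.log #W ≤ (Real.log 2312 + 2312 * (341 ^ 2 * 100)) * M * ρ := by
  rcases le_or_gt #W 1 with hsmall | hlarge
  · exact (Real.log_nonpos (by positivity) (by exact_mod_cast hsmall)).trans (by positivity)
  choose θ hθ hθle using fun w =>
    exists_forall_inner_grad_eq_sub_and_norm_sq_le_effRes (hG.preconnected v₀ w)
  have hnorm : ∀ w ∈ W, ‖θ w‖ ^ 2 ≤ ρ / 2 := by
    intro w hw
    linarith [(ENNReal.ofReal_le_ofReal_iff hρ).1 ((hθle w).trans (hW w hw))]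
  have hρM : 1 ≤ M * ρ := by
    obtain ⟨w, hw, hne⟩ := exists_mem_ne hlarge v₀
    calc 1 ≤ 2 * M * ‖θ w‖ ^ 2 :=
          one_le_mul_norm_sq_of_forall_inner_grad_eq_sub hdeg hne.symm (hθ w)
      _ ≤ 2 * M * (ρ / 2) := by gcongr; exact hnorm w hw
      _ = M * ρ := by ring
  have hcard : (0 : ℝ) < #W := by exact_mod_cast one_pos.trans hlarge
  have hmain : Real.log (#W / 2312) ≤ 2312 * (341 ^ 2 * (100 * M)) * ρ := by
    refine le_of_mul_le_mul_left ?_ hcard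
    calc #W * Real.log (#W / 2312)
        ≤ 4624 * (341 ^ 2 * (100 * M)) * ∑ w ∈ W, ‖θ w‖ ^ 2 :=
          hp.card_mul_log_le_sum_norm_sq hdeg hM fun w _ => hθ w
      _ ≤ 4624 * (341 ^ 2 * (100 * M)) * (#W * (ρ / 2)) := by
          gcongr
          exact (sum_le_card_nsmul W _ _ hnorm).trans_eq (nsmul_eq_mul _ _)
      _ = #W * (2312 * (341 ^ 2 * (100 * M)) * ρ) := by ring
  calc Real.log #W = Real.log 2312 + Real.log (#W / 2312) := by
        rw [Real.log_div hcard.ne' (by norm_num), add_sub_cancel]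
    _ ≤ Real.log 2312 * (M * ρ) + 2312 * (341 ^ 2 * (100 * M)) * ρ := by
        gcongr
        exact le_mul_of_one_le_right (by positivity) hρM
    _ = (Real.log 2312 + 2312 * (341 ^ 2 * 100)) * M * ρ := by ring

lemma effRes_comm [DecidableEq V] (u v : V) : effRes G u v = effRes G v u := by
  simp only [effRes, sub_sq_comm]

lemma effRes_self [DecidableEq V] (v : V) : effRes G v v = 0 := by
  simp [effRes]

end Growth

theorem resistance_separated_subset_planar_general {M : ℕ} (hM : 1 ≤ M) {c : ℝ} (hc : c < 1) :
    ∃ r : ℝ, 0 < r ∧ ∀ (V : Type*) (_ : Fintype V) (_ : DecidableEq V) (G : SimpleGraph V)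
      (_ : DecidableRel G.Adj),
      G.Connected → (∀ v : V, G.degree v ≤ M) → HasCirclePacking G →
      ∀ W : Finset V, 2 ≤ #W → ∃ V' ⊆ W, (#W : ℝ) ^ c ≤ (#V' : ℝ) ∧
        ∀ u ∈ V', ∀ v ∈ V', u ≠ v → ENNReal.ofReal (r * Real.log (#W : ℝ)) ≤ effRes G u v := by
  classical
  let A : ℝ := (Real.log 2312 + 2312 * (341 ^ 2 * 100)) * M
  have hA : 0 < A := by positivity
  have hr : 0 < (1 - c) / A := div_pos (sub_pos.2 hc) hA
  refine ⟨(1 - c) / A, hr, fun V _ _ G _ hG hdeg ⟨z, rad, hp⟩ W hW => ?_⟩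
  have hcard : (0 : ℝ) < #W := by positivity
  set ρ : ℝ := (1 - c) / A * Real.log #W with hρdef
  have hρ : 0 < ρ := mul_pos hr (Real.log_pos (by exact_mod_cast hW))
  let far (u v : V) : Prop := ENNReal.ofReal ρ ≤ effRes G u v
  have : Std.Symm far := ⟨fun u v h => h.trans_eq (effRes_comm u v)⟩
  have hnear : ∀ t ∈ W, (#{w ∈ W | ¬ far t w} : ℝ) ≤ (#W : ℝ) ^ (1 - c) := by
    intro t _
    have hlog : Real.log #{w ∈ W | ¬ far t w} ≤ A * ρ :=
      hp.log_card_le_of_effRes_le hG hdeg hM hρ.le fun w hw => (not_le.1 (mem_filter.1 hw).2).le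
    calc (#{w ∈ W | ¬ far t w} : ℝ) ≤ Real.exp (A * ρ) :=
          (Real.le_exp_log _).trans (Real.exp_le_exp.2 hlog)
      _ = (#W : ℝ) ^ (1 - c) := by
          rw [hρdef, ← mul_assoc, mul_div_cancel₀ _ hA.ne', mul_comm, Real.rpow_def_of_pos hcard]
  obtain ⟨T, hTW, hpair, hT⟩ := exists_pairwise_subset_card_le_mul far W
    (fun w _ => by simp [far, effRes_self, hρ]) hnear
  refine ⟨T, hTW, le_of_mul_le_mul_right ?_ (Real.rpow_pos_of_pos hcard (1 - c)), hpair⟩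
  rwa [← Real.rpow_add hcard, add_sub_cancel, Real.rpow_one]

/-- For every `M ≥ 1` there exist positive constants `c = c(M)` and
`r = r(M)` such that: for every finite connected simple graph `G` with maximal degree at
most `M` admitting a circle packing (i.e. planar), and every `W ⊆ V` with `|W| ≥ 2`,
there is `V' ⊆ W` with `|V'| ≥ |W|^c` such that `R(u,v) ≥ r · log |W|` for all distinct
`u, v ∈ V'`. -/
theorem resistance_separated_subset_planar :
    ∀ M : ℕ, 1 ≤ M → ∃ c r : ℝ, 0 < c ∧ 0 < r ∧
      ∀ (V : Type) (_ : Fintype V) (_ : DecidableEq V) (G : SimpleGraph V)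
        (_ : DecidableRel G.Adj),
        G.Connected → (∀ v : V, G.degree v ≤ M) → HasCirclePacking G →
        ∀ W : Finset V, 2 ≤ W.card →
        ∃ V' ⊆ W, (W.card : ℝ) ^ c ≤ (V'.card : ℝ) ∧
          ∀ u ∈ V', ∀ v ∈ V', u ≠ v →
            ENNReal.ofReal (r * Real.log (W.card : ℝ)) ≤ effRes G u v := by
  intro M hM
  obtain ⟨r, hr, hsep⟩ := resistance_separated_subset_planar_general hM one_half_lt_one
  exact ⟨1 / 2, r, one_half_pos, hr, hsep⟩
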